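/- For all integers i ≥ 1, all odd positive integers r, and all n ≥ 0, the number of overpartition (2^i·r)-tuples with odd parts satisfies OPT̄_{2^i·r}(8n+7) ≡ 0 (mod 2^{i+4}). -/

import Mathlib

/-- The number of overpartitions of `n` into odd parts: a partition of `n` into odd
parts together with a choice of which distinct part values are overlined. -/
def overpartitionOddCount (n : ℕ) : ℕ :=
  ∑ p ∈ Nat.Partition.odds n, 2 ^ p.parts.toFinset.card

/-- The number of overpartition `k`-tuples of `n` with odd parts. -/
def overpartitionOddTuples (k n : ℕ) : ℕ :=
  ∑ c ∈ Finset.Nat.antidiagonalTuple k n, ∏ i, overpartitionOddCount (c i)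

/-!
Let `P` be the generating function of overpartitions into odd parts, the product of
`(1 + qᵐ) / (1 - qᵐ)` over odd `m`. Euler products and Gauss' identity for `φ(-q)` give
`P² φ(-q) = φ(q)`, where `φ(q)` is the sum of `q ^ (n²)` over all integers `n`. Splitting
`φ(q) = 1 + 2a + 2b` into even squares (exponents `≡ 0 mod 4`) and odd squares (exponents
`≡ 1 mod 8`) and putting `y = b / (1 + 2a)`, we get `P² = (1 + 2y) / (1 - 2y)`, hence
`P ^ (2l) = (1 + 2y) ^ (2l) (1 - 4y²) ^ (-l)`. Expand the numerator by the binomial theorem.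
Since the exponents of `y` are `≡ 1 mod 4`, even powers of `2y` contribute nothing to an odd
exponent. For odd `j`, the binomial coefficient of `2l` over `j` absorbs the power of `2`
dividing `2l`. Modulo `16` the remaining factor is a combination of `2y`, which has no exponent
`≡ 7 mod 8`, and `8y³`, where `y³ ≡ b³ mod 2` only has exponents `≡ 3 mod 8`.
-/

open PowerSeries Finset Filter Topology
open scoped PowerSeries.WithPiTopology

section ExponentsModEq

variable {R : Type*} [CommRing R] {m r s : ℕ} {f g : R⟦X⟧}

variable (R) in
/-- The power series all of whose exponents are congruent to `r` modulo `m`, as a submodule. -/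
def exponentsModEq (m r : ℕ) : Submodule R R⟦X⟧ where
  carrier := {f | ∀ n, ¬ n ≡ r [MOD m] → coeff n f = 0}
  add_mem' hf hg n hn := by rw [map_add, hf n hn, hg n hn, add_zero]
  zero_mem' n _ := map_zero (coeff n)
  smul_mem' c f hf n hn := by rw [coeff_smul, hf n hn, smul_zero]

theorem exponentsModEq_mono {d : ℕ} (hd : d ∣ m) (h : r ≡ s [MOD d]) :
    exponentsModEq R m r ≤ exponentsModEq R d s :=
  fun _ hf n hn => hf n fun hn' => hn ((hn'.of_dvd hd).trans h)

theorem X_pow_mem_exponentsModEq (h : s ≡ r [MOD m]) : (X : R⟦X⟧) ^ s ∈ exponentsModEq R m r := by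
  intro n hn
  rw [coeff_X_pow, if_neg]
  rintro rfl
  exact hn h

theorem one_mem_exponentsModEq : (1 : R⟦X⟧) ∈ exponentsModEq R m 0 := by
  simpa using X_pow_mem_exponentsModEq (R := R) (Nat.ModEq.refl (n := m) 0)

theorem mul_mem_exponentsModEq (hf : f ∈ exponentsModEq R m r) (hg : g ∈ exponentsModEq R m s) :
    f * g ∈ exponentsModEq R m (r + s) := by
  intro n hn
  rw [coeff_mul]
  refine sum_eq_zero fun p hp => ?_
  by_cases h : p.1 ≡ r [MOD m]
  · have : ¬ p.2 ≡ s [MOD m] := fun h' => hn (mem_antidiagonal.1 hp ▸ h.add h')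
    rw [hg _ this, mul_zero]
  · rw [hf _ h, zero_mul]

theorem pow_mem_exponentsModEq (hf : f ∈ exponentsModEq R m r) (j : ℕ) :
    f ^ j ∈ exponentsModEq R m (j * r) := by
  induction j with
  | zero => simpa using one_mem_exponentsModEq
  | succ j ih => simpa only [pow_succ, Nat.succ_mul] using mul_mem_exponentsModEq ih hf

theorem mem_exponentsModEq_zero_of_mul_eq_one (hf : f ∈ exponentsModEq R m 0) (hfg : f * g = 1) :
    g ∈ exponentsModEq R m 0 := by
  intro n
  induction n using Nat.strong_induction_on with
  | _ n ih =>
    intro hn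
    have hn0 : n ≠ 0 := fun h => hn (h ▸ rfl)
    have hlower : ∀ p ∈ antidiagonal n, p ≠ (0, n) → coeff p.1 f * coeff p.2 g = 0 := by
      rintro ⟨a, b⟩ hp hne
      obtain rfl : a + b = n := mem_antidiagonal.1 hp
      by_cases ha : a ≡ 0 [MOD m]
      · have hb : ¬ b ≡ 0 [MOD m] := fun hb => hn (ha.add hb)
        have hpos : a ≠ 0 := fun h => hne (by simp [h])
        rw [ih b (by omega) hb, mul_zero]
      · rw [hf a ha, zero_mul]
    have hlead : coeff 0 f * coeff n g = 0 := by
      have := congrArg (coeff n) hfg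
      rwa [coeff_mul, sum_eq_single_of_mem (0, n) (by simp) hlower, coeff_one, if_neg hn0] at this
    have hunit : coeff 0 g * coeff 0 f = 1 := by
      simpa [mul_comm] using congrArg (coeff 0) hfg
    rw [← one_mul (coeff n g), ← hunit, mul_assoc, hlead, mul_zero]

theorem evalNegHom_of_mem_exponentsModEq (hf : f ∈ exponentsModEq R 2 r) :
    evalNegHom f = (-1) ^ r * f := by
  ext n
  have hC : ((-1) ^ r : R⟦X⟧) = C ((-1) ^ r) := by simp
  rw [evalNegHom, coeff_rescale, hC, coeff_C_mul]
  by_cases hn : n ≡ r [MOD 2]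
  · rw [neg_one_pow_eq_pow_mod_two, hn, ← neg_one_pow_eq_pow_mod_two]
  · rw [hf n hn, mul_zero, mul_zero]

theorem tsum_mem_exponentsModEq [TopologicalSpace R] [T2Space R] {ι : Type*} {F : ι → R⟦X⟧}
    (hF : ∀ t, F t ∈ exponentsModEq R m r) : ∑' t, F t ∈ exponentsModEq R m r := by
  by_cases hs : Summable F
  · intro n hn
    rw [hs.map_tsum (coeff n) (WithPiTopology.continuous_coeff R n)]
    simp only [hF _ n hn, tsum_zero]
  · rw [tsum_eq_zero_of_not_summable hs]
    exact zero_mem _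

end ExponentsModEq

section Topology

variable {R : Type*} [CommRing R] [TopologicalSpace R]

theorem continuous_evalNegHom [ContinuousMul R] : Continuous (evalNegHom (A := R)) := by
  rw [continuous_iff_continuousAt]
  intro f
  rw [ContinuousAt, WithPiTopology.tendsto_iff_coeff_tendsto]
  intro d
  simp only [evalNegHom, coeff_rescale]
  exact ((WithPiTopology.continuous_coeff R d).tendsto f).const_mul _

theorem tendsto_zero_of_X_pow_dvd {F : ℕ → R⟦X⟧} (hF : ∀ n, X ^ n ∣ F n) :
    Tendsto F atTop (𝓝 0) := by
  rw [WithPiTopology.tendsto_iff_coeff_tendsto]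
  refine fun d => tendsto_atTop_of_eventually_const (i₀ := d + 1) fun n hn => ?_
  exact X_pow_dvd_iff.1 (hF n) d hn

theorem summable_X_pow {e : ℕ → ℕ} (he : StrictMono e) : Summable fun t => (X : R⟦X⟧) ^ e t := by
  nontriviality R
  apply WithPiTopology.summable_of_tendsto_order_atTop_nhds_top
  simp only [order_X_pow]
  exact ENat.tendsto_natCast_nhds_top.comp he.tendsto_atTop

end Topology

section Shanks

variable {R : Type*} [CommRing R] (q : R)

/-- The `t`-th correction term in Shanks' finite form of Gauss' theta product, see
`shanks_identity`. -/
def shanksTerm (n t : ℕ) : R :=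
  2 * (-1) ^ (t + 1) * q ^ ((t + 1) * (n + 1)) * (∏ k ∈ range t, (1 + q ^ (k + 1))) *
    ∏ k ∈ Ico (t + 1) n, (1 - q ^ (k + 1))

theorem sum_shanksTerm_succ {m n : ℕ} (hm : m ≤ n) :
    ∑ t ∈ range m, shanksTerm q (n + 1) t
      = (1 + q ^ (n + 1)) * ∑ t ∈ range m, shanksTerm q n t
        + 2 * (-1) ^ (m + 1) * q ^ ((m + 1) * (n + 1)) * (∏ k ∈ range m, (1 + q ^ (k + 1))) *
          ∏ k ∈ Ico m n, (1 - q ^ (k + 1))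
        + 2 * q ^ (n + 1) * ∏ k ∈ range n, (1 - q ^ (k + 1)) := by
  induction m with
  | zero => simp
  | succ m ih =>
    rw [sum_range_succ, ih (by omega), sum_range_succ, prod_range_succ _ m,
      prod_eq_prod_Ico_succ_bot (show m < n by omega), shanksTerm, shanksTerm,
      prod_Ico_succ_top (show m + 1 ≤ n by omega)]
    ring

theorem shanks_identity (n : ℕ) :
    (1 + 2 * ∑ t ∈ range n, (-1) ^ (t + 1) * q ^ ((t + 1) ^ 2)) * ∏ k ∈ range n, (1 + q ^ (k + 1))
      = ∏ k ∈ range n, (1 - q ^ (k + 1)) + ∑ t ∈ range n, shanksTerm q n t := by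
  induction n with
  | zero => simp
  | succ n ih =>
    rw [sum_range_succ _ n, sum_range_succ _ n, sum_shanksTerm_succ q le_rfl, shanksTerm,
      prod_range_succ _ n, prod_range_succ _ n]
    simp only [Ico_self, prod_empty]
    linear_combination (1 + q ^ (n + 1)) * ih

theorem pow_dvd_theta_partial_sum_mul_prod_sub_prod (n : ℕ) :
    q ^ n ∣ (1 + 2 * ∑ t ∈ range n, (-1) ^ (t + 1) * q ^ ((t + 1) ^ 2)) *
      ∏ k ∈ range n, (1 + q ^ (k + 1)) - ∏ k ∈ range n, (1 - q ^ (k + 1)) := by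
  rw [shanks_identity, add_sub_cancel_left]
  refine dvd_sum fun t _ => ?_
  have hpow : q ^ n ∣ q ^ ((t + 1) * (n + 1)) := pow_dvd_pow q (by nlinarith)
  exact ((hpow.mul_left _).mul_right _).mul_right _

end Shanks

section Theta

/-- `∑ q ^ (n²)` over odd `n > 0`. -/
noncomputable def oddSquareSeries : ℤ⟦X⟧ := ∑' t : ℕ, X ^ (2 * t + 1) ^ 2

/-- `∑ q ^ (n²)` over even `n > 0`; Gauss' theta series is
`φ(q) = 1 + 2 * evenSquareSeries + 2 * oddSquareSeries`. -/
noncomputable def evenSquareSeries : ℤ⟦X⟧ := ∑' t : ℕ, X ^ (2 * t + 2) ^ 2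

theorem summable_X_pow_odd_sq : Summable fun t : ℕ => (X : ℤ⟦X⟧) ^ (2 * t + 1) ^ 2 :=
  summable_X_pow fun _ _ h => by gcongr

theorem summable_X_pow_even_sq : Summable fun t : ℕ => (X : ℤ⟦X⟧) ^ (2 * t + 2) ^ 2 :=
  summable_X_pow fun _ _ h => by gcongr

theorem oddSquareSeries_mem : oddSquareSeries ∈ exponentsModEq ℤ 8 1 :=
  tsum_mem_exponentsModEq fun t => X_pow_mem_exponentsModEq <| by
    obtain ⟨s, hs⟩ := (Nat.even_mul_succ_self t).two_dvd
    rw [show (2 * t + 1) ^ 2 = 1 + 8 * s by linarith]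
    simp [Nat.ModEq]

theorem evenSquareSeries_mem : evenSquareSeries ∈ exponentsModEq ℤ 4 0 :=
  tsum_mem_exponentsModEq fun t => X_pow_mem_exponentsModEq <|
    Nat.modEq_zero_iff_dvd.2 ⟨(t + 1) ^ 2, by ring⟩

theorem constantCoeff_evenSquareSeries : constantCoeff evenSquareSeries = 0 := by
  rw [evenSquareSeries, summable_X_pow_even_sq.map_tsum constantCoeff
    (WithPiTopology.continuous_constantCoeff ℤ)]
  simp

theorem evalNegHom_oddSquareSeries : evalNegHom oddSquareSeries = -oddSquareSeries := by
  simpa using evalNegHom_of_mem_exponentsModEq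
    (exponentsModEq_mono (d := 2) (by norm_num) rfl oddSquareSeries_mem)

theorem evalNegHom_evenSquareSeries : evalNegHom evenSquareSeries = evenSquareSeries := by
  simpa using evalNegHom_of_mem_exponentsModEq
    (exponentsModEq_mono (d := 2) (by norm_num) rfl evenSquareSeries_mem)

theorem hasSum_alternating_X_pow_sq :
    HasSum (fun t : ℕ => (-1) ^ (t + 1) * (X : ℤ⟦X⟧) ^ (t + 1) ^ 2)
      (-oddSquareSeries + evenSquareSeries) := by
  refine HasSum.even_add_odd ?_ ?_
  · convert! summable_X_pow_odd_sq.hasSum.neg using 2 with t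
    rw [(odd_two_mul_add_one t).neg_one_pow, neg_one_mul]
  · convert! summable_X_pow_even_sq.hasSum using 2 with t
    rw [Even.neg_one_pow ⟨t + 1, by ring⟩, one_mul]

theorem multipliable_one_add_X_pow : Multipliable fun k : ℕ => 1 + (X : ℤ⟦X⟧) ^ (k + 1) := by
  simpa [sum_range_succ] using
    Nat.Partition.multipliable_powerSeriesMk_card_countRestricted ℤ 2

theorem gauss_theta_mul_tprod :
    (1 - 2 * oddSquareSeries + 2 * evenSquareSeries) * ∏' k : ℕ, (1 + X ^ (k + 1))
      = ∏' k : ℕ, (1 - X ^ (k + 1)) := by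
  have hsum := (hasSum_alternating_X_pow_sq.tendsto_sum_nat.const_mul 2).const_add 1
  have hadd := multipliable_one_add_X_pow.hasProd.tendsto_prod_nat
  have hsub := (WithPiTopology.multipliable_one_sub_X_pow ℤ).hasProd.tendsto_prod_nat
  have hzero := tendsto_zero_of_X_pow_dvd
    (pow_dvd_theta_partial_sum_mul_prod_sub_prod (X : ℤ⟦X⟧))
  have hlim := tendsto_nhds_unique hzero ((hsum.mul hadd).sub hsub)
  linear_combination -hlim

end Theta

section GeneratingFunction

/-- The generating function of `overpartitionOddCount`. -/
noncomputable def overpartitionOddSeries : ℤ⟦X⟧ :=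
  PowerSeries.mk fun n => (overpartitionOddCount n : ℤ)

theorem coeff_pow_eq_sum_antidiagonalTuple {R : Type*} [CommSemiring R] (f : R⟦X⟧) (k n : ℕ) :
    coeff n (f ^ k) = ∑ c ∈ Finset.Nat.antidiagonalTuple k n, ∏ i, coeff (c i) f := by
  have hprod : f ^ k = ∏ _i : Fin k, f := by simp
  rw [hprod, coeff_prod]
  refine sum_equiv Finsupp.equivFunOnFinite (fun c => ?_) fun c _ => rfl
  simp [mem_finsuppAntidiag, Finset.Nat.mem_antidiagonalTuple]

theorem coeff_overpartitionOddSeries_pow (k n : ℕ) :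
    coeff n (overpartitionOddSeries ^ k) = overpartitionOddTuples k n := by
  simp [coeff_pow_eq_sum_antidiagonalTuple, overpartitionOddTuples, overpartitionOddSeries]

theorem overpartitionOddSeries_eq_genFun :
    overpartitionOddSeries = Nat.Partition.genFun fun m _ => if Even m then 0 else 2 := by
  ext n
  rw [overpartitionOddSeries, coeff_mk, Nat.Partition.coeff_genFun, overpartitionOddCount,
    Nat.Partition.odds, Nat.Partition.restricted, sum_filter]
  push_cast
  refine sum_congr rfl fun p _ => ?_
  simp only [← ite_not (Even _)]
  rw [Finsupp.prod, Multiset.toFinsupp_support, prod_ite_zero]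
  simp

theorem one_add_tsum_C_mul_X_pow_mul_one_sub {R : Type*} [CommRing R] [TopologicalSpace R]
    [IsTopologicalRing R] [T2Space R] (c : R) {m : ℕ} (hm : m ≠ 0) :
    (1 + ∑' j : ℕ, C c * (X : R⟦X⟧) ^ (m * (j + 1))) * (1 - X ^ m) = 1 + C (c - 1) * X ^ m := by
  have hconst : constantCoeff ((X : R⟦X⟧) ^ m) = 0 := by simp [hm]
  have hsum := WithPiTopology.summable_pow_of_constantCoeff_eq_zero hconst
  have hgeom := WithPiTopology.tsum_pow_mul_one_sub_of_constantCoeff_eq_zero hconst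
  have htsum : ∑' j : ℕ, C c * (X : R⟦X⟧) ^ (m * (j + 1)) =
      C c * X ^ m * ∑' j : ℕ, (X ^ m) ^ j := by
    rw [← hsum.tsum_mul_left]
    exact tsum_congr fun j => by ring
  rw [htsum, map_sub, map_one]
  linear_combination C c * X ^ m * hgeom

/-- The factor of the infinite product for `overpartitionOddSeries` contributed by the parts of
size `m + 1`: it is `(1 + X ^ (m + 1)) / (1 - X ^ (m + 1))` for odd `m + 1`, and `1` otherwise. -/
noncomputable def overpartitionOddFactor (m : ℕ) : ℤ⟦X⟧ :=
  1 + ∑' j : ℕ, C (if Even (m + 1) then (0 : ℤ) else 2) * X ^ ((m + 1) * (j + 1))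

theorem hasProd_overpartitionOddFactor : HasProd overpartitionOddFactor overpartitionOddSeries := by
  have h := Nat.Partition.hasProd_genFun fun m _ => if Even m then (0 : ℤ) else 2
  rw [← overpartitionOddSeries_eq_genFun] at h
  simp only [smul_eq_C_mul] at h
  exact h

theorem overpartitionOddFactor_mul_one_sub (m : ℕ) :
    overpartitionOddFactor m * (1 - X ^ (m + 1)) = 1 - (-X) ^ (m + 1) := by
  rw [overpartitionOddFactor, one_add_tsum_C_mul_X_pow_mul_one_sub _ (Nat.add_one_ne_zero m)]
  split_ifs with h
  · simp [h.neg_pow, sub_eq_add_neg]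
  · simp [(Nat.not_even_iff_odd.1 h).neg_pow]

theorem overpartitionOddFactor_mul_one_add (m : ℕ) :
    overpartitionOddFactor m * (1 + (-X) ^ (m + 1)) = 1 + X ^ (m + 1) := by
  by_cases h : Even (m + 1)
  · simp [overpartitionOddFactor, h, h.neg_pow]
  · have hfactor := overpartitionOddFactor_mul_one_sub m
    rw [(Nat.not_even_iff_odd.1 h).neg_pow] at hfactor ⊢
    linear_combination hfactor

theorem overpartitionOddSeries_mul_tprod_one_sub :
    overpartitionOddSeries * ∏' k : ℕ, (1 - X ^ (k + 1))
      = evalNegHom (∏' k : ℕ, (1 - X ^ (k + 1))) := by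
  have hsub := (WithPiTopology.multipliable_one_sub_X_pow ℤ).hasProd
  have hneg := hsub.map (evalNegHom (A := ℤ)) continuous_evalNegHom
  have hmul := hasProd_overpartitionOddFactor.mul hsub
  simp only [overpartitionOddFactor_mul_one_sub] at hmul
  refine hmul.unique ?_
  simpa [Function.comp_def] using hneg

theorem overpartitionOddSeries_mul_evalNegHom_tprod_one_add :
    overpartitionOddSeries * evalNegHom (∏' k : ℕ, (1 + X ^ (k + 1)))
      = ∏' k : ℕ, (1 + X ^ (k + 1)) := by
  have hadd := multipliable_one_add_X_pow.hasProd
  have hneg := hadd.map (evalNegHom (A := ℤ)) continuous_evalNegHom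
  simp only [Function.comp_def, map_add, map_one, map_pow, evalNegHom_X] at hneg
  have hmul := hasProd_overpartitionOddFactor.mul hneg
  simp only [overpartitionOddFactor_mul_one_add] at hmul
  exact hmul.unique hadd

theorem overpartitionOddSeries_sq_mul_theta_neg :
    overpartitionOddSeries ^ 2 * (1 - 2 * oddSquareSeries + 2 * evenSquareSeries)
      = 1 + 2 * oddSquareSeries + 2 * evenSquareSeries := by
  set D : ℤ⟦X⟧ := ∏' k : ℕ, (1 + X ^ (k + 1))
  set E : ℤ⟦X⟧ := ∏' k : ℕ, (1 - X ^ (k + 1))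
  have hgauss : (1 - 2 * oddSquareSeries + 2 * evenSquareSeries) * D = E := gauss_theta_mul_tprod
  have hgauss' : (1 + 2 * oddSquareSeries + 2 * evenSquareSeries) * evalNegHom D
      = evalNegHom E := by
    simpa [map_ofNat evalNegHom, evalNegHom_oddSquareSeries, evalNegHom_evenSquareSeries] using
      congrArg evalNegHom hgauss
  have hE : overpartitionOddSeries * E = evalNegHom E := overpartitionOddSeries_mul_tprod_one_sub
  have hD : overpartitionOddSeries * evalNegHom D = D :=
    overpartitionOddSeries_mul_evalNegHom_tprod_one_add
  have hD_ne : evalNegHom D ≠ 0 := by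
    intro h0
    apply WithPiTopology.tprod_one_sub_X_pow_ne_zero ℤ
    change E = 0
    rw [← hgauss, ← hD, h0, mul_zero, mul_zero]
  refine mul_right_cancel₀ hD_ne ?_
  linear_combination overpartitionOddSeries * (1 - 2 * oddSquareSeries + 2 * evenSquareSeries) * hD
    + overpartitionOddSeries * hgauss + hE - hgauss'

end GeneratingFunction

section ThetaQuotient

theorem exists_overpartitionOddSeries_sq_mul_one_sub :
    ∃ y ∈ exponentsModEq ℤ 4 1, (∀ n, 2 ∣ coeff (8 * n + 7) (y ^ 3)) ∧
      overpartitionOddSeries ^ 2 * (1 - 2 * y) = 1 + 2 * y := by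
  set a := evenSquareSeries
  set b := oddSquareSeries
  have hunit : IsUnit (1 + 2 * a) := by
    simp [isUnit_iff_constantCoeff, a, constantCoeff_evenSquareSeries]
  obtain ⟨w, hw⟩ := hunit.exists_right_inv
  have hw_mem : w ∈ exponentsModEq ℤ 4 0 := by
    refine mem_exponentsModEq_zero_of_mul_eq_one ?_ hw
    rw [two_mul]
    exact add_mem one_mem_exponentsModEq (add_mem evenSquareSeries_mem evenSquareSeries_mem)
  refine ⟨b * w, ?_, fun n => ?_, ?_⟩
  · exact mul_mem_exponentsModEq
      (exponentsModEq_mono (by norm_num) rfl oddSquareSeries_mem) hw_mem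
  · have hcube : (b * w) ^ 3 = b ^ 3 + C 2 * (b ^ 3 * (-3 * (a * w) + 6 * (a * w) ^ 2
        - 4 * (a * w) ^ 3)) := by
      have hw_eq : w = 1 - 2 * (a * w) := by linear_combination hw
      have hw_cube : w ^ 3 = (1 - 2 * (a * w)) ^ 3 := congrArg (· ^ 3) hw_eq
      rw [mul_pow, hw_cube, map_ofNat]
      ring
    have hb : coeff (8 * n + 7) (b ^ 3) = 0 :=
      pow_mem_exponentsModEq oddSquareSeries_mem 3 _ (by simp [Nat.ModEq])
    rw [hcube, map_add, hb, zero_add, coeff_C_mul]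
    exact dvd_mul_right _ _
  · linear_combination w * overpartitionOddSeries_sq_mul_theta_neg
      + (1 - overpartitionOddSeries ^ 2) * hw

variable {y v : ℤ⟦X⟧}

theorem coeff_even_pow_mul_eq_zero (hy : y ∈ exponentsModEq ℤ 4 1) (hv : (1 - 4 * y ^ 2) * v = 1)
    {j n : ℕ} (hj : Even j) (hn : Odd n) (l : ℕ) : coeff n ((2 * y) ^ j * v ^ l) = 0 := by
  have hy2 : y ∈ exponentsModEq ℤ 2 1 := exponentsModEq_mono (by norm_num) rfl hy
  have hv2 : v ∈ exponentsModEq ℤ 2 0 := by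
    refine mem_exponentsModEq_zero_of_mul_eq_one ?_ hv
    have hsq : y ^ 2 ∈ exponentsModEq ℤ 2 0 :=
      exponentsModEq_mono dvd_rfl rfl (pow_mem_exponentsModEq hy2 2)
    simpa only [smul_eq_C_mul, map_ofNat] using
      sub_mem one_mem_exponentsModEq (Submodule.smul_mem _ (4 : ℤ) hsq)
  have h2y : 2 * y ∈ exponentsModEq ℤ 2 1 := two_mul y ▸ add_mem hy2 hy2
  refine mul_mem_exponentsModEq (pow_mem_exponentsModEq h2y j) (pow_mem_exponentsModEq hv2 l) n ?_
  rw [mul_one, mul_zero, add_zero, Nat.ModEq, Nat.even_iff.1 hj, Nat.odd_iff.1 hn]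
  decide

theorem exists_pow_eq_of_one_sub_four_mul {R : Type*} [CommRing R] {u v : R}
    (hv : (1 - 4 * u) * v = 1) (l : ℕ) : ∃ z, v ^ l = 1 + 4 * l * u + 16 * z := by
  induction l with
  | zero => exact ⟨0, by simp⟩
  | succ l ih =>
    obtain ⟨z, hz⟩ := ih
    refine ⟨u ^ 2 * v + l * u ^ 2 * v + z * v, ?_⟩
    push_cast
    linear_combination v * hz + (1 + 4 * u + 4 * l * u) * hv

theorem exists_odd_pow_mul_eq {R : Type*} [CommRing R] {y v : R} (hv : (1 - 4 * y ^ 2) * v = 1)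
    {j : ℕ} (hj : Odd j) (l : ℕ) :
    ∃ (c d : ℤ) (z : R), (2 * y) ^ j * v ^ l = 2 * c * y + 8 * d * y ^ 3 + 16 * z := by
  obtain ⟨z, hz⟩ := exists_pow_eq_of_one_sub_four_mul hv l
  obtain rfl | rfl | hj5 : j = 1 ∨ j = 3 ∨ 4 ≤ j := by grind
  · exact ⟨1, l, 2 * y * z, by rw [hz]; push_cast; ring⟩
  · exact ⟨0, 1, y ^ 3 * (2 * l * y ^ 2 + 8 * z), by rw [hz]; push_cast; ring⟩
  · obtain ⟨s, rfl⟩ := Nat.exists_eq_add_of_le hj5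
    exact ⟨0, 0, y ^ 4 * (2 * y) ^ s * v ^ l, by rw [pow_add]; push_cast; ring⟩

theorem sixteen_dvd_coeff_odd_pow_mul (hy : y ∈ exponentsModEq ℤ 4 1)
    (hy3 : ∀ n, 2 ∣ coeff (8 * n + 7) (y ^ 3)) (hv : (1 - 4 * y ^ 2) * v = 1)
    {j : ℕ} (hj : Odd j) (l n : ℕ) : 16 ∣ coeff (8 * n + 7) ((2 * y) ^ j * v ^ l) := by
  obtain ⟨c, d, z, hz⟩ := exists_odd_pow_mul_eq hv hj l
  have hsmul : (2 * y) ^ j * v ^ l = (2 * c) • y + (8 * d) • y ^ 3 + (16 : ℤ) • z := by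
    rw [hz]
    simp only [zsmul_eq_mul]
    push_cast
    ring
  have hy7 : coeff (8 * n + 7) y = 0 := hy _ (by rw [Nat.ModEq]; omega)
  obtain ⟨e, he⟩ := hy3 n
  refine ⟨d * e + coeff (8 * n + 7) z, ?_⟩
  simp only [hsmul, map_add, map_zsmul, smul_eq_mul, hy7, he]
  ring

theorem dvd_choose_of_coprime {d k j : ℕ} (hk : d ∣ k) (hj : d.Coprime j) : d ∣ k.choose j := by
  rcases j with _ | j
  · rw [(Nat.coprime_zero_right d).1 hj]
    exact one_dvd _
  rcases k with _ | k
  · simp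
  · refine hj.dvd_of_dvd_mul_right ?_
    rw [← Nat.add_one_mul_choose_eq]
    exact hk.mul_right _

theorem pow_two_mul_eq_sum {R : Type*} [CommRing R] {F y v : R}
    (hF : F ^ 2 * (1 - 2 * y) = 1 + 2 * y) (hv : (1 - 4 * y ^ 2) * v = 1) (l : ℕ) :
    F ^ (2 * l) = ∑ j ∈ range (2 * l + 1), (2 * y) ^ j * v ^ l * (2 * l).choose j := by
  have hFsq : F ^ 2 = (2 * y + 1) ^ 2 * v := by
    linear_combination (1 + 2 * y) * v * hF - F ^ 2 * hv
  rw [pow_mul, hFsq, mul_pow, ← pow_mul, add_pow, sum_mul]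
  exact sum_congr rfl fun j _ => by ring

end ThetaQuotient

theorem overpartitionOddTuples_eight_n_seven_general (i k n : ℕ) (hi : 1 ≤ i) (hk : 2 ^ i ∣ k) :
    overpartitionOddTuples k (8 * n + 7) ≡ 0 [MOD 2 ^ (i + 4)] := by
  obtain ⟨l, rfl⟩ : 2 ∣ k := (dvd_pow_self 2 (by omega)).trans hk
  obtain ⟨y, hy, hy3, hquot⟩ := exists_overpartitionOddSeries_sq_mul_one_sub
  have hy0 : constantCoeff y = 0 := by simpa using hy 0 (by decide)
  obtain ⟨v, hv⟩ : ∃ v, (1 - 4 * y ^ 2) * v = 1 :=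
    IsUnit.exists_right_inv (by simp [isUnit_iff_constantCoeff, hy0])
  rw [Nat.modEq_zero_iff_dvd, ← Int.natCast_dvd_natCast, ← coeff_overpartitionOddSeries_pow,
    pow_two_mul_eq_sum hquot hv, map_sum]
  refine dvd_sum fun j _ => ?_
  rw [← map_natCast (C (R := ℤ)), coeff_mul_C]
  rcases j.even_or_odd with hj | hj
  · rw [coeff_even_pow_mul_eq_zero hy hv hj (by grind), zero_mul]
    exact dvd_zero _
  · have hchoose : 2 ^ i ∣ (2 * l).choose j :=
      dvd_choose_of_coprime hk (hj.coprime_two_left.pow_left i)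
    rw [pow_add, mul_comm (2 ^ i), Nat.cast_mul]
    exact mul_dvd_mul (sixteen_dvd_coeff_odd_pow_mul hy hy3 hv hj l n) (mod_cast hchoose)

theorem overpartitionOddTuples_eight_n_seven (i r n : ℕ) (hi : 1 ≤ i)
    (hr : 0 < r) (hodd : Odd r) :
    overpartitionOddTuples (2 ^ i * r) (8 * n + 7) ≡ 0 [MOD 2 ^ (i + 4)] :=
  overpartitionOddTuples_eight_n_seven_general i (2 ^ i * r) n hi (dvd_mul_right _ _)
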